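/- Let u ≥ 0 and n ≥ 1 be integers, let R = ∏_{p prime} ℤ_p, and let A be a random n×(n+u) matrix over R whose entries are independent and identically distributed according to the Haar probability measure on R. Then P(A : R^(n+u) → R^n is surjective) = ∏_{k=u+1}^{n+u} ∏_{p prime} (1 − p^(−k)); in particular, when u ≥ 1 this equals ∏_{k=u+1}^{n+u} ζ(k)^(−1), where ζ is the Riemann zeta function, and when u = 0 it equals 0. -/

import Mathlib

open MeasureTheory Filter

instance (p : Nat.Primes) : Fact (Nat.Prime (p : ℕ)) := ⟨p.2⟩

noncomputable instance (p : ℕ) [Fact p.Prime] : MeasurableSpace ℤ_[p] := borel _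

instance (p : ℕ) [Fact p.Prime] : BorelSpace ℤ_[p] := ⟨rfl⟩

/-- The product of the rings of `p`-adic integers over all primes `p`
(isomorphic to the profinite completion of `ℤ`). -/
abbrev Zhat : Type := ∀ p : Nat.Primes, ℤ_[(p : ℕ)]

lemma unif_aux {G H : Type*} [AddGroup G] [MeasurableSpace G] [MeasurableAdd G] [AddGroup H]
    [Finite H] (ν : Measure G) [IsProbabilityMeasure ν] [ν.IsAddLeftInvariant] (φ : G →+ H)
    (hs : Function.Surjective φ) (hm : ∀ h, MeasurableSet (φ ⁻¹' {h})) (T : Set H) :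
    ν.real (φ ⁻¹' T) = (Nat.card T : ℝ) / Nat.card H := by
  classical
  have := Fintype.ofFinite H
  have key : ∀ h, ν.real (φ ⁻¹' {h}) = ν.real (φ ⁻¹' {0}) := by
    intro h
    obtain ⟨g, rfl⟩ := hs h
    have := measure_preimage_add ν g (φ ⁻¹' {φ g})
    rw [measureReal_def, measureReal_def, ← this]
    congr 2
    ext x
    simp
  have sm : ∀ S : Finset H, ν.real (φ ⁻¹' S) = S.card * ν.real (φ ⁻¹' {0}) := by
    intro S
    have : φ ⁻¹' (S : Set H) = ⋃ h ∈ S, φ ⁻¹' {h} := by ext x; simp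
    rw [this, measureReal_biUnion_finset]
    · simp [key]
    · intro a _ b _ hab
      exact Disjoint.preimage _ (by simpa using hab)
    · intro b _
      exact hm b
  have h1 := sm Finset.univ
  have h2 := sm T.toFinset
  simp only [Finset.coe_univ, Set.preimage_univ, probReal_univ, Finset.card_univ] at h1
  rw [Set.coe_toFinset] at h2
  rw [h2, Set.toFinset_card, Nat.card_eq_fintype_card, Nat.card_eq_fintype_card]
  have : (Fintype.card H : ℝ) ≠ 0 := by simp
  field_simp
  linear_combination (-(Fintype.card T : ℝ)) * h1

lemma meas_toZMod (p : ℕ) [Fact p.Prime] (a : ZMod p) :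
    MeasurableSet ((PadicInt.toZMod (p := p)) ⁻¹' {a}) := by
  obtain ⟨x, rfl⟩ := ZMod.ringHom_surjective (PadicInt.toZMod (p := p)) a
  have : (PadicInt.toZMod (p := p)) ⁻¹' {PadicInt.toZMod x} = Metric.ball x 1 := by
    ext y
    rw [Set.mem_preimage, Set.mem_singleton_iff, ← sub_eq_zero, ← map_sub, ← RingHom.mem_ker,
      PadicInt.ker_toZMod, IsLocalRing.mem_maximalIdeal, PadicInt.mem_nonunits, Metric.mem_ball,
      dist_eq_norm]
  rw [this]
  exact Metric.isOpen_ball.measurableSet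

lemma li_iff {K : Type*} [Field K] {n m : ℕ} (M : Fin n → Fin m → K) :
    LinearIndependent K M ↔ ∃ B : Matrix (Fin m) (Fin n) K, Matrix.of M * B = 1 := by
  rw [← Matrix.mulVec_surjective_iff_exists_right_inverse]
  have : LinearIndependent K M ↔ (Matrix.of M).rank = n := by
    rw [linearIndependent_iff_card_eq_finrank_span, Matrix.rank_eq_finrank_span_row]
    simp [Set.finrank, eq_comm]
    rfl
  rw [this, Matrix.rank]
  rw [show (Matrix.of M).mulVec = (Matrix.of M).mulVecLin from rfl, ← LinearMap.coe_toAddHom,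
    LinearMap.coe_toAddHom, ← LinearMap.range_eq_top]
  constructor
  · intro h
    exact Submodule.eq_top_of_finrank_eq (by simpa using h)
  · intro h
    rw [h]; simp

lemma surj_iff {n m : ℕ} (A : Fin n → Fin m → Zhat) :
    Function.Surjective (Matrix.of A).mulVecLin ↔
      ∀ p : Nat.Primes, LinearIndependent (ZMod (p : ℕ))
        (fun i j => PadicInt.toZMod (A i j p)) := by
  rw [show ((Matrix.of A).mulVecLin : _ → _) = (Matrix.of A).mulVec from rfl,
    Matrix.mulVec_surjective_iff_exists_right_inverse]
  simp_rw [li_iff]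
  constructor
  · rintro ⟨B, hB⟩ p
    let f : Zhat →+* ZMod (p : ℕ) := PadicInt.toZMod.comp (Pi.evalRingHom _ p)
    refine ⟨B.map f, ?_⟩
    have := congrArg (fun M => M.map f) hB
    simp only [Matrix.map_mul] at this
    rw [Matrix.map_one _ (map_zero f) (map_one f)] at this
    exact this
  · intro h
    have h' : ∀ p : Nat.Primes, ∃ B : Matrix (Fin m) (Fin n) ℤ_[(p : ℕ)],
        (Matrix.of fun i j => A i j p) * B = 1 := by
      intro p
      obtain ⟨B, hB⟩ := h p
      have hs := ZMod.ringHom_surjective (PadicInt.toZMod (p := (p : ℕ)))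
      choose g hg using hs
      set C : Matrix (Fin n) (Fin n) ℤ_[(p : ℕ)] :=
        (Matrix.of fun i j => A i j p) * B.map g with hC
      have h1 : C.map (PadicInt.toZMod (p := (p : ℕ))) = 1 := by
        rw [hC, Matrix.map_mul, ← hB]
        congr 1
        ext i j
        simp [hg]
      have hu : IsUnit C.det := by
        by_contra hn
        have : C.det ∈ RingHom.ker (PadicInt.toZMod (p := (p : ℕ))) := by
          rw [PadicInt.ker_toZMod]
          exact hn
        rw [RingHom.mem_ker, RingHom.map_det, RingHom.mapMatrix_apply, h1] at this
        simp at this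
      refine ⟨B.map g * C⁻¹, ?_⟩
      rw [← Matrix.mul_assoc, ← hC, Matrix.mul_nonsing_inv _ hu]
    choose B hB using h'
    refine ⟨Matrix.of fun i j p => B p i j, ?_⟩
    ext i j p
    have := congrFun (congrFun (hB p) i) j
    simp only [Matrix.mul_apply, Matrix.of_apply, Finset.sum_apply, Pi.mul_apply] at this ⊢
    rw [this]
    simp only [Matrix.one_apply]
    split_ifs <;> rfl

lemma count (p : ℕ) [Fact p.Prime] (u n : ℕ) :
    (Nat.card {M : Fin n → Fin (n + u) → ZMod p | LinearIndependent (ZMod p) M} : ℝ) /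
      Nat.card (Fin n → Fin (n + u) → ZMod p) =
      ∏ k ∈ Finset.Icc (u + 1) (n + u), (1 - (p : ℝ)⁻¹ ^ k) := by
  have hp : (p : ℝ) ≠ 0 := by exact_mod_cast (Fact.out : p.Prime).ne_zero
  have h1 : Nat.card {M : Fin n → Fin (n + u) → ZMod p | LinearIndependent (ZMod p) M} =
      ∏ i : Fin n, (p ^ (n + u) - p ^ i.val) := by
    have := card_linearIndependent (K := ZMod p) (V := Fin (n + u) → ZMod p) (k := n) (by simp)
    rw [ZMod.card, Module.finrank_fin_fun] at this
    exact this
  have h2 : Nat.card (Fin n → Fin (n + u) → ZMod p) = ∏ i : Fin n, p ^ (n + u) := by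
    simp
  rw [h1, h2, Nat.cast_prod, Nat.cast_prod, ← Finset.prod_div_distrib,
    Fin.prod_univ_eq_prod_range (fun i => (((p ^ (n + u) - p ^ i : ℕ) : ℝ) / (p ^ (n + u) : ℕ))) n]
  refine Finset.prod_bij' (fun i _ => n + u - i) (fun k _ => n + u - k) ?_ ?_ ?_ ?_ ?_
  · intro i hi; simp at hi ⊢; omega
  · intro i hi; simp at hi ⊢; omega
  · intro i hi; simp at hi ⊢; omega
  · intro i hi; simp at hi ⊢; omega
  · intro i hi
    simp at hi
    rw [Nat.cast_sub (Nat.pow_le_pow_right (Fact.out : p.Prime).pos (by omega))]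
    push_cast
    obtain ⟨d, hd⟩ := Nat.exists_eq_add_of_le (show i ≤ n + u by omega)
    rw [hd, Nat.add_sub_cancel_left, pow_add, inv_pow]
    field_simp

lemma hasProd_zeta (k : ℕ) (hk : 2 ≤ k) :
    HasProd (fun p : Nat.Primes => (1 - ((p : ℕ) : ℝ)⁻¹ ^ k)) ((riemannZeta (k : ℂ))⁻¹).re ∧
    ((((riemannZeta (k : ℂ))⁻¹).re : ℝ) : ℂ) = (riemannZeta (k : ℂ))⁻¹ := by
  have hk' : 1 < (k : ℂ).re := by
    rw [Complex.natCast_re]; exact_mod_cast hk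
  have h := (riemannZeta_eulerProduct_hasProd hk').inv₀ (riemannZeta_ne_zero_of_one_lt_re hk')
  have e : (fun p : Nat.Primes => ((1 - ((p : ℕ) : ℂ) ^ (-(k : ℂ)))⁻¹)⁻¹) =
      fun p : Nat.Primes => (((1 - ((p : ℕ) : ℝ)⁻¹ ^ k : ℝ)) : ℂ) := by
    ext p
    rw [inv_inv, Complex.cpow_neg, Complex.cpow_natCast]
    push_cast
    rw [inv_pow]
  rw [e] at h
  have h1 : HasProd (fun p : Nat.Primes => (1 - ((p : ℕ) : ℝ)⁻¹ ^ k))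
      ((riemannZeta (k : ℂ))⁻¹).re := by
    have := (Complex.continuous_re.tendsto _).comp h
    refine this.congr fun s => ?_
    simp only [Function.comp]
    rw [← Complex.ofReal_prod, Complex.ofReal_re]
  refine ⟨h1, ?_⟩
  have h2 := h1.map Complex.ofRealHom Complex.continuous_ofReal
  exact h2.unique h

lemma hasProd_primes_zero : HasProd (fun p : Nat.Primes => (1 - ((p : ℕ) : ℝ)⁻¹ ^ 1)) 0 := by
  have hns : ¬ Summable (fun p : Nat.Primes ↦ (((p : ℕ) : ℝ)⁻¹)) := by
    simpa using Nat.Primes.not_summable_one_div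
  have ht : Tendsto (fun s : Finset Nat.Primes => ∑ p ∈ s, ((p : ℕ) : ℝ)⁻¹) atTop atTop := by
    have hmono : Monotone (fun s : Finset Nat.Primes => ∑ p ∈ s, ((p : ℕ) : ℝ)⁻¹) :=
      fun s t hst => Finset.sum_le_sum_of_subset_of_nonneg hst (fun _ _ _ => by positivity)
    rcases tendsto_atTop_of_monotone hmono with h | ⟨l, hl⟩
    · exact h
    · exact absurd ⟨l, hl⟩ hns
  have hle : ∀ p : Nat.Primes, 0 ≤ 1 - ((p : ℕ) : ℝ)⁻¹ ^ 1 := by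
    intro p
    rw [pow_one, sub_nonneg]
    exact inv_le_one_of_one_le₀ (by exact_mod_cast p.2.one_le)
  refine tendsto_of_tendsto_of_tendsto_of_le_of_le tendsto_const_nhds
    (Real.tendsto_exp_neg_atTop_nhds_zero.comp ht) ?_ ?_
  · intro s
    exact Finset.prod_nonneg fun p _ => hle p
  · intro s
    simp only [Function.comp]
    rw [← Finset.sum_neg_distrib, Real.exp_sum]
    refine Finset.prod_le_prod (fun p _ => hle p) fun p _ => ?_
    rw [pow_one]
    exact Real.one_sub_le_exp_neg _

lemma fin_measure (u n : ℕ) (μ : Measure Zhat)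
    [IsProbabilityMeasure μ] [μ.IsAddHaarMeasure] (F : Finset Nat.Primes) :
    MeasurableSet {A : Fin n → Fin (n + u) → Zhat | ∀ p ∈ F, LinearIndependent (ZMod (p : ℕ))
        (fun i j => PadicInt.toZMod (A i j p))} ∧
    (Measure.pi fun _ : Fin n => Measure.pi fun _ : Fin (n + u) => μ).real
      {A | ∀ p ∈ F, LinearIndependent (ZMod (p : ℕ))
        (fun i j => PadicInt.toZMod (A i j p))} =
      ∏ p ∈ F, ∏ k ∈ Finset.Icc (u + 1) (n + u), (1 - ((p : ℕ) : ℝ)⁻¹ ^ k) := by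
  classical
  let φ : (Fin n → Fin (n + u) → Zhat) →+
      (∀ p : F, Fin n → Fin (n + u) → ZMod ((p : Nat.Primes) : ℕ)) :=
    { toFun := fun A p i j => PadicInt.toZMod (A i j p)
      map_zero' := by ext; simp
      map_add' := by intros; ext; simp }
  let T : Set (∀ p : F, Fin n → Fin (n + u) → ZMod ((p : Nat.Primes) : ℕ)) :=
    Set.univ.pi fun p => {M | LinearIndependent (ZMod ((p : Nat.Primes) : ℕ)) M}
  have hT : {A : Fin n → Fin (n + u) → Zhat | ∀ p ∈ F, LinearIndependent (ZMod (p : ℕ))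
        (fun i j => PadicInt.toZMod (A i j p))} = φ ⁻¹' T := by
    ext A
    simp [T, φ]
  have hs : Function.Surjective φ := by
    intro B
    choose g hg using fun p : Nat.Primes => ZMod.ringHom_surjective (PadicInt.toZMod (p := (p : ℕ)))
    refine ⟨fun i j p => if h : p ∈ F then g p (B ⟨p, h⟩ i j) else 0, ?_⟩
    ext p i j
    simp [φ, hg]
  have hm : ∀ h, MeasurableSet (φ ⁻¹' {h}) := by
    intro h
    have : φ ⁻¹' {h} = ⋂ (p : F) (i : Fin n) (j : Fin (n + u)),
        (fun A : Fin n → Fin (n + u) → Zhat => A i j p) ⁻¹'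
          ((PadicInt.toZMod (p := ((p : Nat.Primes) : ℕ))) ⁻¹' {h p i j}) := by
      ext A
      simp [φ, funext_iff]
    rw [this]
    refine MeasurableSet.iInter fun p => MeasurableSet.iInter fun i => MeasurableSet.iInter fun j => ?_
    exact (meas_toZMod _ _).preimage (by fun_prop)
  refine ⟨?_, ?_⟩
  · rw [hT, ← Set.biUnion_preimage_singleton]
    exact MeasurableSet.biUnion (Set.to_countable _) fun h _ => hm h
  · have i1 : (Measure.pi fun _ : Fin (n + u) => μ).IsAddLeftInvariant :=
      Measure.pi.isAddLeftInvariant _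
    have i2 : (Measure.pi fun _ : Fin n => Measure.pi fun _ : Fin (n + u) => μ).IsAddLeftInvariant :=
      Measure.pi.isAddLeftInvariant _
    rw [hT, unif_aux _ φ hs hm T]
    have hc : Nat.card T = ∏ p : F, Nat.card {M : Fin n → Fin (n + u) → ZMod ((p : Nat.Primes) : ℕ)
        | LinearIndependent (ZMod ((p : Nat.Primes) : ℕ)) M} := by
      rw [← Nat.card_pi]
      exact Nat.card_congr (Equiv.Set.univPi _)
    rw [hc, Nat.card_pi, Nat.cast_prod, Nat.cast_prod, ← Finset.prod_div_distrib]
    simp_rw [count]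
    exact Finset.prod_coe_sort F
      (fun p => ∏ k ∈ Finset.Icc (u + 1) (n + u), (1 - ((p : ℕ) : ℝ)⁻¹ ^ k))

lemma hasProd_measure (u n : ℕ) (μ : Measure Zhat)
    [IsProbabilityMeasure μ] [μ.IsAddHaarMeasure] :
    HasProd (fun p : Nat.Primes => ∏ k ∈ Finset.Icc (u + 1) (n + u), (1 - ((p : ℕ) : ℝ)⁻¹ ^ k))
      ((Measure.pi fun _ : Fin n => Measure.pi fun _ : Fin (n + u) => μ)
        {A | Function.Surjective (Matrix.of A).mulVecLin}).toReal := by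
  have h := tendsto_measure_iInter_atTop
    (μ := Measure.pi fun _ : Fin n => Measure.pi fun _ : Fin (n + u) => μ)
    (s := fun F : Finset Nat.Primes => {A | ∀ p ∈ F, LinearIndependent (ZMod (p : ℕ))
        (fun i j => PadicInt.toZMod (A i j p))})
    (fun F => (fin_measure u n μ F).1.nullMeasurableSet)
    (fun F G hFG A hA p hp => hA p (hFG hp)) ⟨∅, measure_ne_top _ _⟩
  have e : (⋂ F : Finset Nat.Primes, {A : Fin n → Fin (n + u) → Zhat |
        ∀ p ∈ F, LinearIndependent (ZMod (p : ℕ)) (fun i j => PadicInt.toZMod (A i j p))}) =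
      {A | Function.Surjective (Matrix.of A).mulVecLin} := by
    ext A
    rw [Set.mem_ofPred_eq, surj_iff]
    simp only [Set.mem_iInter, Set.mem_ofPred_eq]
    exact ⟨fun h p => h {p} p (by simp), fun h F p _ => h p⟩
  rw [e] at h
  have h' := (ENNReal.tendsto_toReal (measure_ne_top _ _)).comp h
  refine Tendsto.congr (fun F => ?_) h'
  exact (fin_measure u n μ F).2

theorem stmt11 (u n : ℕ) (hn : 1 ≤ n) (μ : Measure Zhat)
    [IsProbabilityMeasure μ] [μ.IsAddHaarMeasure] :
    ((Measure.pi fun _ : Fin n => Measure.pi fun _ : Fin (n + u) => μ)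
        {A | Function.Surjective (Matrix.of A).mulVecLin}).toReal =
      ∏ k ∈ Finset.Icc (u + 1) (n + u), ∏' p : Nat.Primes, (1 - ((p : ℕ) : ℝ)⁻¹ ^ k) ∧
    (1 ≤ u →
      ((∏ k ∈ Finset.Icc (u + 1) (n + u),
          ∏' p : Nat.Primes, (1 - ((p : ℕ) : ℝ)⁻¹ ^ k) : ℝ) : ℂ) =
        ∏ k ∈ Finset.Icc (u + 1) (n + u), (riemannZeta (k : ℂ))⁻¹) ∧
    (u = 0 →
      ((Measure.pi fun _ : Fin n => Measure.pi fun _ : Fin (n + u) => μ)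
        {A | Function.Surjective (Matrix.of A).mulVecLin}).toReal = 0) := by
  have hk : ∀ k ∈ Finset.Icc (u + 1) (n + u),
      Multipliable (fun p : Nat.Primes => (1 - ((p : ℕ) : ℝ)⁻¹ ^ k)) := by
    intro k hk
    rw [Finset.mem_Icc] at hk
    rcases Nat.lt_or_ge k 2 with h | h
    · obtain rfl : k = 1 := by omega
      exact ⟨_, hasProd_primes_zero⟩
    · exact ⟨_, (hasProd_zeta k h).1⟩
  have h1 := (hasProd_measure u n μ).unique (hasProd_prod fun k h => (hk k h).hasProd)
  refine ⟨h1, ?_, ?_⟩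
  · intro hu
    rw [Complex.ofReal_prod]
    refine Finset.prod_congr rfl fun k hk => ?_
    rw [Finset.mem_Icc] at hk
    have := hasProd_zeta k (by omega)
    rw [this.1.tprod_eq, this.2]
  · intro hu
    rw [h1]
    refine Finset.prod_eq_zero (i := 1) (by rw [Finset.mem_Icc]; omega) ?_
    exact hasProd_primes_zero.tprod_eq
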